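/- arXiv:2503.11131 — 6 statements merged into one kernel-verified Lean document; each statement's English description precedes it below -/
import Mathlib

section
/- Let F_q be a finite field and let U ⊆ F_q^n and V ⊆ F_q^m be linear subspaces, each containing a nonzero vector. Then the minimum distance of the tensor product code U ⊗ V equals the product of the minimum distances: ‖U ⊗ V‖₀ = ‖U‖₀ · ‖V‖₀. -/
/-!
The upper bound is attained by the rank-one matrix `u i * v j` built from minimum-weight words
`u ∈ U`, `v ∈ V`: its support is the product of the two supports. For the lower bound, a nonzero
`M ∈ U ⊗ V` has an entry `M (i₀, j₀) ≠ 0`. Column `j₀` is a nonzero word of `U`, so it has at least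
`minDist U` nonzero entries, and each of these lies in a row which is a nonzero word of `V`,
hence has at least `minDist V` nonzero entries.
-/

/-- Hamming weight of a vector: the number of nonzero coordinates. -/
noncomputable def hammingWt {ι : Type*} [Fintype ι] {F : Type*} [Zero F] (x : ι → F) : ℕ :=
  Set.ncard {i | x i ≠ 0}

/-- Minimum distance of a linear code: the least Hamming weight of a nonzero codeword. -/
noncomputable def minDist {ι : Type*} [Fintype ι] {F : Type*} [Field F]
    (U : Submodule F (ι → F)) : ℕ :=
  sInf {k | ∃ x ∈ U, x ≠ 0 ∧ hammingWt x = k}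

/-- The tensor product code `U ⊗ V`: matrices (presented as functions on pairs of indices)
all of whose columns lie in `U` and rows lie in `V`. -/
def tensorCode {F : Type*} [Field F] {n m : ℕ}
    (U : Submodule F (Fin n → F)) (V : Submodule F (Fin m → F)) :
    Submodule F (Fin n × Fin m → F) where
  carrier := {M | (∀ j, (fun i => M (i, j)) ∈ U) ∧ (∀ i, (fun j => M (i, j)) ∈ V)}
  add_mem' := by
    intro x y hx hy
    exact ⟨fun j => U.add_mem (hx.1 j) (hy.1 j), fun i => V.add_mem (hx.2 i) (hy.2 i)⟩
  zero_mem' := ⟨fun j => U.zero_mem, fun i => V.zero_mem⟩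
  smul_mem' := by
    intro c x hx
    exact ⟨fun j => U.smul_mem c (hx.1 j), fun i => V.smul_mem c (hx.2 i)⟩

theorem minDist_le_hammingWt {ι : Type*} [Fintype ι] {F : Type*} [Field F]
    {U : Submodule F (ι → F)} {x : ι → F} (hx : x ∈ U) (h0 : x ≠ 0) :
    minDist U ≤ hammingWt x :=
  Nat.sInf_le ⟨x, hx, h0, rfl⟩

theorem exists_hammingWt_eq_minDist {ι : Type*} [Fintype ι] {F : Type*} [Field F]
    {U : Submodule F (ι → F)} (hU : ∃ u ∈ U, u ≠ 0) :
    ∃ x ∈ U, x ≠ 0 ∧ hammingWt x = minDist U := by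
  obtain ⟨u, hu, h0⟩ := hU
  exact Nat.sInf_mem (s := {k | ∃ x ∈ U, x ≠ 0 ∧ hammingWt x = k}) ⟨_, u, hu, h0, rfl⟩

theorem hammingWt_eq_sum_rows {ι κ : Type*} [Fintype ι] [Fintype κ] {F : Type*} [Zero F]
    (M : ι × κ → F) : hammingWt M = ∑ i, hammingWt (fun j => M (i, j)) := by
  classical
  simp only [hammingWt, Set.ncard_eq_toFinset_card', Set.toFinset_ofPred, Finset.card_filter]
  exact Fintype.sum_prod_type _

theorem hammingWt_outer {ι κ : Type*} [Fintype ι] [Fintype κ] {F : Type*} [Field F]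
    (u : ι → F) (v : κ → F) :
    hammingWt (fun p : ι × κ => u p.1 * v p.2) = hammingWt u * hammingWt v := by
  have h : {p : ι × κ | u p.1 * v p.2 ≠ 0} = {i | u i ≠ 0} ×ˢ {j | v j ≠ 0} := by
    ext p; simp
  rw [hammingWt, h, Set.ncard_prod]; rfl

/-- The lower bound: the rows meeting the support of a nonzero column are nonzero. -/
theorem mul_minDist_le_hammingWt {F : Type*} [Field F] {n m : ℕ}
    {U : Submodule F (Fin n → F)} {V : Submodule F (Fin m → F)}
    {M : Fin n × Fin m → F} (hM : M ∈ tensorCode U V) (h0 : M ≠ 0) :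
    minDist U * minDist V ≤ hammingWt M := by
  classical
  obtain ⟨⟨i₀, j₀⟩, hij⟩ := Function.ne_iff.mp h0
  have hcol : minDist U ≤ hammingWt (fun i => M (i, j₀)) :=
    minDist_le_hammingWt (hM.1 j₀) fun h => hij (congrFun h i₀)
  have hcard : hammingWt (fun i => M (i, j₀)) =
      (Finset.univ.filter fun i => M (i, j₀) ≠ 0).card := by
    simp only [hammingWt, Set.ncard_eq_toFinset_card', Set.toFinset_ofPred]
  calc minDist U * minDist V
      ≤ (Finset.univ.filter fun i => M (i, j₀) ≠ 0).card * minDist V :=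
        Nat.mul_le_mul_right _ (hcard ▸ hcol)
    _ ≤ ∑ i ∈ Finset.univ.filter (fun i => M (i, j₀) ≠ 0), hammingWt (fun j => M (i, j)) := by
        rw [← smul_eq_mul]
        refine Finset.card_nsmul_le_sum _ _ _ fun i hi => ?_
        exact minDist_le_hammingWt (hM.2 i) fun h => (Finset.mem_filter.mp hi).2 (congrFun h j₀)
    _ ≤ ∑ i, hammingWt (fun j => M (i, j)) :=
        Finset.sum_le_sum_of_subset (Finset.filter_subset _ _)
    _ = hammingWt M := (hammingWt_eq_sum_rows M).symm

theorem minDist_tensorCode {F : Type*} [Field F] [Fintype F] {n m : ℕ}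
    (U : Submodule F (Fin n → F)) (V : Submodule F (Fin m → F))
    (hU : ∃ u ∈ U, u ≠ 0) (hV : ∃ v ∈ V, v ≠ 0) :
    minDist (tensorCode U V) = minDist U * minDist V := by
  obtain ⟨u, hu, hu0, hud⟩ := exists_hammingWt_eq_minDist hU
  obtain ⟨v, hv, hv0, hvd⟩ := exists_hammingWt_eq_minDist hV
  have hmem : (fun p : Fin n × Fin m => u p.1 * v p.2) ∈ tensorCode U V := by
    refine ⟨fun j => ?_, fun i => V.smul_mem (u i) hv⟩
    have h : (fun i => u i * v j) = v j • u := by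
      ext i; simp [mul_comm]
    exact h ▸ U.smul_mem (v j) hu
  have hne : (fun p : Fin n × Fin m => u p.1 * v p.2) ≠ 0 := by
    obtain ⟨i, hi⟩ := Function.ne_iff.mp hu0
    obtain ⟨j, hj⟩ := Function.ne_iff.mp hv0
    exact fun h => mul_ne_zero hi hj (congrFun h (i, j))
  apply le_antisymm
  · rw [← hud, ← hvd, ← hammingWt_outer]
    exact minDist_le_hammingWt hmem hne
  · obtain ⟨M, hM, hM0, hMd⟩ := exists_hammingWt_eq_minDist ⟨_, hmem, hne⟩
    exact hMd ▸ mul_minDist_le_hammingWt hM hM0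
end

section
/- Let F_q be a finite field with q ≥ 2 elements and let x, y ∈ F_q^n. Let m' = |supp(x) ∩ supp(y)| and let m be the number of coordinates i for which exactly one of x_i, y_i is nonzero. Then there exists λ ∈ F_q with λ ≠ 0 such that (q-1) · ‖x - λy‖₀ ≤ (q-1)(m + m') - m'. -/
/-- For vectors `x, y ∈ F_q^n`, with `m'` the size of the common support and `m` the number
of coordinates where exactly one of `x, y` is nonzero, there is a nonzero `λ ∈ F_q` with
`(q-1) ⬝ ‖x - λy‖₀ ≤ (q-1)(m + m') - m'`. -/
theorem exists_lambda_weight_sub_smul {F : Type*} [Field F] [Fintype F]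
    (hq : 2 ≤ Fintype.card F) {n : ℕ} (x y : Fin n → F)
    (m' : ℕ) (hm' : m' = Set.ncard ({i | x i ≠ 0} ∩ {i | y i ≠ 0}))
    (m : ℕ) (hm : m = Set.ncard {i | (x i ≠ 0 ∧ y i = 0) ∨ (x i = 0 ∧ y i ≠ 0)}) :
    ∃ l : F, l ≠ 0 ∧
      (Fintype.card F - 1) * hammingWt (x - l • y) ≤
        (Fintype.card F - 1) * (m + m') - m' := by
  classical
  set S : Finset (Fin n) := Finset.univ.filter fun i => x i ≠ 0 ∧ y i ≠ 0 with hS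
  set D : Finset (Fin n) :=
    Finset.univ.filter fun i => (x i ≠ 0 ∧ y i = 0) ∨ (x i = 0 ∧ y i ≠ 0) with hD
  have hmS : m' = S.card := by
    rw [hm', ← Set.ncard_coe_finset]
    congr 1
    ext i
    simp [hS]
  have hmD : m = D.card := by
    rw [hm, ← Set.ncard_coe_finset]
    congr 1
    ext i
    simp [hD]
  set U : Finset F := Finset.univ.erase 0 with hU
  have hUc : U.card = Fintype.card F - 1 := by
    rw [hU, Finset.card_erase_of_mem (Finset.mem_univ _), Finset.card_univ]
  have hUne : U.Nonempty := Finset.card_pos.mp (by omega)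
  have hmaps : ∀ i ∈ S, x i / y i ∈ U := by
    intro i hi
    have hi' : x i ≠ 0 ∧ y i ≠ 0 := by simpa [hS] using hi
    simpa [hU] using hi'
  -- Some ratio is attained at least as often as the average `m' / (q - 1)`.
  obtain ⟨l, hlU, hl⟩ : ∃ l ∈ U, S.card ≤ U.card * (S.filter fun i => x i / y i = l).card := by
    by_contra! hlt
    have hsum := Finset.sum_lt_sum_of_nonempty hUne hlt
    rw [← Finset.mul_sum, ← Finset.card_eq_sum_card_fiberwise hmaps, Finset.sum_const,
      smul_eq_mul] at hsum
    exact lt_irrefl _ hsum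
  refine ⟨l, Finset.ne_of_mem_erase hlU, ?_⟩
  set W : Finset (Fin n) := Finset.univ.filter fun i => (x - l • y) i ≠ 0 with hW
  have hwt : hammingWt (x - l • y) = W.card := by
    rw [hammingWt, ← Set.ncard_coe_finset]
    congr 1
    ext i
    simp [hW]
  -- Coordinates with ratio `l` cancel, and `x - l • y` vanishes off `supp x ∪ supp y`.
  have hdisj : Disjoint W (S.filter fun i => x i / y i = l) := by
    rw [Finset.disjoint_left]
    intro i hiW hiS
    simp only [hW, hS, Finset.mem_filter, Finset.mem_univ, true_and, Pi.sub_apply,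
      Pi.smul_apply, smul_eq_mul] at hiW hiS
    apply hiW
    rw [← hiS.2, div_mul_cancel₀ _ hiS.1.2, sub_self]
  have hsub : W ∪ (S.filter fun i => x i / y i = l) ⊆ D ∪ S := by
    apply Finset.union_subset
    · intro i hi
      simp only [hW, hS, hD, Finset.mem_union, Finset.mem_filter, Finset.mem_univ, true_and,
        Pi.sub_apply, Pi.smul_apply, smul_eq_mul] at hi ⊢
      by_cases hx : x i = 0 <;> by_cases hy : y i = 0 <;> simp_all
    · exact (Finset.filter_subset _ _).trans Finset.subset_union_right
  have hcard : W.card + (S.filter fun i => x i / y i = l).card ≤ D.card + S.card := by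
    rw [← Finset.card_union_of_disjoint hdisj]
    exact (Finset.card_le_card hsub).trans (Finset.card_union_le _ _)
  rw [hwt, hmS, hmD, ← hUc]
  apply Nat.le_sub_of_add_le
  calc U.card * W.card + S.card
      ≤ U.card * W.card + U.card * (S.filter fun i => x i / y i = l).card := by gcongr
    _ = U.card * (W.card + (S.filter fun i => x i / y i = l).card) := by ring
    _ ≤ U.card * (D.card + S.card) := by gcongr
end

section
/- For any finite field F_q with q elements, any real ε with 0 < ε < 1, and any n ∈ ℕ with n ≥ 1, there exist a natural number N with N ≤ (qn/ε)² and an injective F_q-linear map C : F_q^n → F_q^N such that for every nonzero x ∈ F_q^n, the Hamming weight of C(x) satisfies (1-ε)(1 - 1/q)N ≤ ‖C(x)‖₀ ≤ (1 - 1/q)N. -/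
open Polynomial

/-- The extension of a finite field `F` with `|F| ^ m` elements, for every `m ≥ 1`. -/
lemma exists_finite_extension (F : Type*) [Field F] [Fintype F] (m : ℕ) (hm : m ≠ 0) :
    ∃ (K : Type) (_ : Field K) (_ : Fintype K) (_ : Algebra F K),
      Fintype.card K = Fintype.card F ^ m := by
  obtain ⟨p, hp⟩ := CharP.exists F
  have : Fact p.Prime := ⟨CharP.char_is_prime F p⟩
  have : NeZero m := ⟨hm⟩
  refine ⟨FiniteField.Extension F p m, inferInstance, Fintype.ofFinite _, inferInstance, ?_⟩
  rw [Fintype.card_eq_nat_card, Fintype.card_eq_nat_card, FiniteField.natCard_extension]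

/-- A nonzero linear form over `F_q` is nonzero on a fraction `1 - 1/q` of its domain. -/
lemma card_mul_ne_zero_of_surjective {F V : Type*} [Field F] [Fintype F] [DecidableEq F]
    [AddCommGroup V] [Module F V] [Fintype V] (f : V →ₗ[F] F) (hf : Function.Surjective f) :
    (Fintype.card F : ℝ) * (Finset.univ.filter fun v => f v ≠ 0).card
      = (Fintype.card F - 1) * Fintype.card V := by
  have h1 := Submodule.card_eq_card_quotient_mul_card (LinearMap.ker f)
  rw [Nat.card_congr (f.quotKerEquivOfSurjective hf).toEquiv] at h1
  have h2 : Nat.card (LinearMap.ker f) = (Finset.univ.filter fun v => f v = 0).card := by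
    rw [Nat.subtype_card]
    simp
  have h3 := Finset.card_filter_add_card_filter_not (s := (Finset.univ : Finset V))
    (fun v => f v = 0)
  rw [h2, Nat.card_eq_fintype_card, Nat.card_eq_fintype_card] at h1
  rw [Finset.card_univ] at h3
  have hker : (Fintype.card V : ℝ) = _ := congrArg Nat.cast h1
  have hsplit : _ = (Fintype.card V : ℝ) := congrArg Nat.cast h3
  push_cast at hker hsplit
  simp only [ne_eq]
  linear_combination (Fintype.card F : ℝ) * hsplit + hker

/-- The Reed-Solomon code over `K` concatenated with the Hadamard code over `F`: the message `x` is
the coefficient vector of a polynomial `p` of degree `< n`, and the coordinate `(α, β)` of its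
codeword is `Tr (β * p(α))`. -/
noncomputable def balancedCode (F K : Type*) [Field F] [Field K] [Algebra F K] (n : ℕ) :
    (Fin n → F) →ₗ[F] (K × K → F) :=
  LinearMap.pi fun i => Algebra.trace F K ∘ₗ LinearMap.mulLeft F i.2 ∘ₗ
    (aeval (R := F) i.1).toLinearMap ∘ₗ (degreeLT F n).subtype ∘ₗ
    (degreeLTEquiv F n).symm.toLinearMap

/-- The weight of a nonzero codeword is `(1 - 1/q) * Q * (Q - r)`, with `r` the number of roots in `K`
of a polynomial of degree less than `n`. -/
lemma balancedCode_weight {F K : Type*} [Field F] [Fintype F] [DecidableEq F] [Field K] [Fintype K]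
    [Algebra F K] (n : ℕ) (x : Fin n → F) (hx : x ≠ 0) :
    ∃ r : ℕ, r ≤ n ∧
      (Fintype.card F : ℝ) * (Finset.univ.filter fun i => balancedCode F K n x i ≠ 0).card
        = (Fintype.card F - 1) * Fintype.card K * (Fintype.card K - r) := by
  classical
  set P := (degreeLTEquiv F n).symm x with hP
  set p : F[X] := (P : F[X]) with hp
  have hp0 : p ≠ 0 := by simpa [hp, hP] using hx
  have hdeg : p.natDegree < n := (natDegree_lt_iff_degree_lt hp0).2 (mem_degreeLT.1 P.2)
  have hC : ∀ a b : K, balancedCode F K n x (a, b) = Algebra.trace F K (b * aeval a p) :=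
    fun a b => rfl
  refine ⟨(Finset.univ.filter fun a : K => aeval a p = 0).card, ?_, ?_⟩
  · have hsub : (Finset.univ.filter fun a : K => aeval a p = 0) ⊆ (p.aroots K).toFinset := by
      intro a ha
      simpa [mem_aroots, hp0] using ha
    calc _ ≤ (p.aroots K).toFinset.card := Finset.card_le_card hsub
      _ ≤ Multiset.card (p.aroots K) := Multiset.toFinset_card_le _
      _ ≤ (p.map (algebraMap F K)).natDegree := card_roots' _
      _ ≤ n := by rw [natDegree_map]; exact hdeg.le
  · have hfib : ∀ a : K, (Fintype.card F : ℝ) *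
        (Finset.univ.filter fun b : K => balancedCode F K n x (a, b) ≠ 0).card
        = if aeval a p = 0 then 0 else (Fintype.card F - 1) * (Fintype.card K : ℝ) := by
      intro a
      split_ifs with h
      · simp [hC, h]
      · rw [← card_mul_ne_zero_of_surjective
          (Algebra.trace F K ∘ₗ LinearMap.mulLeft F (aeval a p))]
        · simp [hC, mul_comm]
        · intro c
          obtain ⟨b, rfl⟩ := Algebra.trace_surjective F K c
          exact ⟨(aeval a p)⁻¹ * b, by simp [mul_inv_cancel_left₀ h]⟩
    have hsum : (Finset.univ.filter fun i => balancedCode F K n x i ≠ 0).card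
        = ∑ a : K, (Finset.univ.filter fun b : K => balancedCode F K n x (a, b) ≠ 0).card := by
      simp only [Finset.card_filter]
      exact Fintype.sum_prod_type _
    have h3 := Finset.card_filter_add_card_filter_not (s := (Finset.univ : Finset K))
      (fun a => aeval a p = 0)
    rw [Finset.card_univ] at h3
    have hsplit : _ = (Fintype.card K : ℝ) := congrArg Nat.cast h3
    push_cast at hsplit
    rw [hsum, Nat.cast_sum, Finset.mul_sum, Finset.sum_congr rfl fun a _ => hfib a,
      Finset.sum_ite, Finset.sum_const_zero, zero_add, Finset.sum_const, nsmul_eq_mul]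
    linear_combination (Fintype.card F - 1) * (Fintype.card K : ℝ) * hsplit

/-- Existence of ε-balanced codes: for every finite field `F_q`, `0 < ε < 1` and `n ≥ 1`,
there is an injective linear code `C : F_q^n → F_q^N` with `N ≤ (qn/ε)²` all of whose
nonzero codewords have Hamming weight in `[(1-ε)(1-1/q)N, (1-1/q)N]`. -/
theorem exists_eps_balanced_code {F : Type*} [Field F] [Fintype F]
    (ε : ℝ) (hε0 : 0 < ε) (hε1 : ε < 1) (n : ℕ) (hn : 1 ≤ n) :
    ∃ (N : ℕ) (C : (Fin n → F) →ₗ[F] (Fin N → F)),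
      (N : ℝ) ≤ ((Fintype.card F : ℝ) * n / ε) ^ 2 ∧
      Function.Injective C ∧
      ∀ x : Fin n → F, x ≠ 0 →
        (1 - ε) * (1 - 1 / (Fintype.card F : ℝ)) * N ≤ (hammingWt (C x) : ℝ) ∧
        (hammingWt (C x) : ℝ) ≤ (1 - 1 / (Fintype.card F : ℝ)) * N := by
  classical
  have hq : (1 : ℝ) < Fintype.card F := by exact_mod_cast Fintype.one_lt_card
  have hn' : (1 : ℝ) ≤ n := by exact_mod_cast hn
  have hnε : 1 ≤ (n : ℝ) / ε := by rw [le_div_iff₀ hε0]; linarith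
  obtain ⟨m, hm1, hm2⟩ := exists_nat_pow_near hnε hq
  obtain ⟨K, _, _, _, hK⟩ := exists_finite_extension F (m + 1) m.succ_ne_zero
  have hK' : (Fintype.card K : ℝ) = (Fintype.card F : ℝ) ^ (m + 1) := by rw [hK]; push_cast; rfl
  rw [← hK', div_lt_iff₀ hε0] at hm2
  have hN : (Fintype.card (K × K) : ℝ) = (Fintype.card K : ℝ) ^ 2 := by
    rw [Fintype.card_prod]; push_cast; ring
  have hQ0 : (0 : ℝ) < Fintype.card K := by exact_mod_cast Fintype.card_pos
  let e := (Fintype.equivFin (K × K)).symm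
  let C := LinearMap.funLeft F F e ∘ₗ balancedCode F K n
  have hwt : ∀ x, hammingWt (C x)
      = (Finset.univ.filter fun i => balancedCode F K n x i ≠ 0).card := by
    intro x
    rw [← Set.ncard_coe_finset, hammingWt, ← Set.ncard_image_of_injective _ e.injective]
    congr 1
    ext i
    constructor
    · rintro ⟨j, hj, rfl⟩
      simpa [C, LinearMap.funLeft_apply] using hj
    · intro hi
      refine ⟨e.symm i, ?_, e.apply_symm_apply i⟩
      simpa [C, LinearMap.funLeft_apply] using hi
  have key : ∀ x : Fin n → F, x ≠ 0 →
      (1 - ε) * (1 - 1 / (Fintype.card F : ℝ)) * (Fintype.card (K × K) : ℕ)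
        ≤ (hammingWt (C x) : ℝ) ∧
      (hammingWt (C x) : ℝ) ≤ (1 - 1 / (Fintype.card F : ℝ)) * (Fintype.card (K × K) : ℕ) := by
    intro x hx
    obtain ⟨r, hr, h⟩ := balancedCode_weight (K := K) n x hx
    rw [← hwt] at h
    have hr' : (r : ℝ) ≤ n := by exact_mod_cast hr
    have hr0 : (0 : ℝ) ≤ r := r.cast_nonneg
    have hw : (hammingWt (C x) : ℝ)
        = (1 - 1 / (Fintype.card F : ℝ)) * (Fintype.card K * (Fintype.card K - r)) := by
      field_simp
      linear_combination h
    have hc : 0 ≤ 1 - 1 / (Fintype.card F : ℝ) := by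
      rw [sub_nonneg, div_le_one (by linarith)]; exact hq.le
    rw [hw, hN, mul_comm (1 - ε), mul_assoc]
    constructor
    · refine mul_le_mul_of_nonneg_left ?_ hc
      nlinarith
    · refine mul_le_mul_of_nonneg_left ?_ hc
      nlinarith
  refine ⟨Fintype.card (K × K), C, ?_, ?_, key⟩
  · rw [hN]
    refine pow_le_pow_left₀ hQ0.le ?_ 2
    rw [hK', pow_succ, mul_comm, mul_div_assoc]
    exact mul_le_mul_of_nonneg_left hm1 (by linarith)
  · rw [injective_iff_map_eq_zero]
    intro x hx
    by_contra hx0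
    have h1 := (key x hx0).1
    have h0 : hammingWt (C x) = 0 := by rw [hx]; simp [hammingWt]
    have hc : 0 < 1 - 1 / (Fintype.card F : ℝ) := by
      rw [sub_pos, div_lt_one (by linarith)]; exact hq
    rw [h0, hN, Nat.cast_zero] at h1
    have : 0 < (1 - ε) * (1 - 1 / (Fintype.card F : ℝ)) * (Fintype.card K : ℝ) ^ 2 :=
      mul_pos (mul_pos (by linarith) hc) (by positivity)
    linarith
end

section
/- Let F_q be a finite field with q elements, let ε > 0 and d ≥ 1, and let C ∈ F_q^{N×n} be a generator matrix of an ε-balanced code of minimum distance d. If X ∈ F_q^{n×n} has rank at least two, then q · ‖C X Cᵀ‖₀ ≥ (q+1) · d², i.e., ‖C X Cᵀ‖₀ ≥ (1 + 1/q) · d². -/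
/-!
The rows of `C X Cᵀ` are the codewords `C r`, where `r` runs over the rows of `C X`. Such a
codeword has weight at least `d` whenever `r ≠ 0`. So the weight of `C X Cᵀ` is at least `d`
times the number of nonzero rows of `C X` (`mul_le_matWt_of_rows`).

Since `X` has rank at least two, its column space contains independent vectors `x`, `y`. A row of
`C X` is nonzero at every index of the union `S` of the supports of `C x` and `C y`. The `q + 1`
codewords `C x` and `C (y + a x)`, `a ∈ F`, are nonzero, and every index of `S` lies in the support
of exactly `q` of them (`hammingWt_add_sum_le`), so `(q + 1) d ≤ q |S|`.
-/

open Matrix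

/-- Hamming weight of a matrix: the number of nonzero entries. -/
noncomputable def matWt {η κ : Type*} {F : Type*} [Zero F] (M : Matrix η κ F) : ℕ :=
  Set.ncard {p : η × κ | M p.1 p.2 ≠ 0}

/-- `C` is a generator matrix of an `ε`-balanced code of minimum distance `d`:
`x ↦ Cx` is injective and every nonzero codeword `Cx` has Hamming weight in `[d, (1+ε)d]`. -/
def IsBalancedGen {F : Type*} [Field F] {N n : ℕ} (ε : ℝ) (d : ℕ)
    (C : Matrix (Fin N) (Fin n) F) : Prop :=
  Function.Injective C.mulVec ∧
  ∀ x : Fin n → F, x ≠ 0 →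
    (d : ℝ) ≤ (hammingWt (C.mulVec x) : ℝ) ∧
    (hammingWt (C.mulVec x) : ℝ) ≤ (1 + ε) * d

open Classical in
theorem hammingWt_eq_sum {ι F : Type*} [Fintype ι] [Zero F] (x : ι → F) :
    hammingWt x = ∑ i, if x i ≠ 0 then 1 else 0 := by
  rw [hammingWt, Set.ncard_eq_toFinset_card', Set.toFinset_ofPred, Finset.card_filter]

open Classical in
theorem matWt_eq_sum {η κ F : Type*} [Fintype η] [Fintype κ] [Zero F] (M : Matrix η κ F) :
    matWt M = ∑ i, hammingWt (M i) := by
  simp only [hammingWt_eq_sum]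
  rw [matWt, Set.ncard_eq_toFinset_card', Set.toFinset_ofPred, Finset.card_filter,
    Fintype.sum_prod_type]

/-- A set of rows, each of weight at least `d`, bounds the weight of a matrix from below. -/
theorem mul_le_matWt_of_rows {η κ F : Type*} [Fintype η] [Fintype κ] [Zero F]
    (M : Matrix η κ F) (d : ℕ) (S : Finset η) (hS : ∀ i ∈ S, d ≤ hammingWt (M i)) :
    S.card * d ≤ matWt M := by
  rw [matWt_eq_sum]
  calc S.card * d = ∑ _i ∈ S, d := by simp
    _ ≤ ∑ i ∈ S, hammingWt (M i) := Finset.sum_le_sum hS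
    _ ≤ ∑ i, hammingWt (M i) := Finset.sum_le_univ_sum_of_nonneg (fun _ => Nat.zero_le _)

open Classical in
/-- The pointwise form of the double count: of the `q + 1` values `s` and `t + a s`, `a ∈ F`, at
most `q` are nonzero, and none is if `s = t = 0`. -/
theorem indicator_add_sum_le {F : Type*} [Field F] [Fintype F] (s t : F) :
    (if s ≠ 0 then 1 else 0) + (∑ a : F, if t + a * s ≠ 0 then 1 else 0)
      ≤ Fintype.card F * (if s ≠ 0 ∨ t ≠ 0 then 1 else 0) := by
  by_cases hs : s = 0
  · by_cases ht : t = 0 <;> simp [hs, ht]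
  · -- only `a = -t / s` makes `t + a * s` vanish
    have hlt : (Finset.univ.filter fun a : F => t + a * s ≠ 0).card < Fintype.card F := by
      apply Finset.card_lt_univ_of_notMem (x := -t / s)
      simp [div_mul_cancel₀ _ hs]
    rw [← Finset.card_filter]
    simp only [ne_eq, hs, not_false_eq_true, true_or, if_true, mul_one] at hlt ⊢
    omega

open Classical in
/-- The weights along the projective line spanned by `u` and `v` sum to at most `q` times the size
of the union of the two supports. -/
theorem hammingWt_add_sum_le {ι F : Type*} [Fintype ι] [Field F] [Fintype F] (u v : ι → F) :
    hammingWt u + ∑ a : F, hammingWt (v + a • u)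
      ≤ Fintype.card F * (Finset.univ.filter fun i => u i ≠ 0 ∨ v i ≠ 0).card := by
  simp only [hammingWt_eq_sum, Finset.card_filter]
  rw [Finset.sum_comm, ← Finset.sum_add_distrib, Finset.mul_sum]
  exact Finset.sum_le_sum fun i _ => indicator_add_sum_le (u i) (v i)

/-- Two independent vectors in the column space of a matrix of rank at least two, with independence
in the form that `x` and all `y + a x` are nonzero. -/
theorem exists_pair_of_two_le_rank {F : Type*} [Field F] {n : ℕ}
    (X : Matrix (Fin n) (Fin n) F) (hX : 2 ≤ X.rank) :
    ∃ a b : Fin n → F, X *ᵥ a ≠ 0 ∧ ∀ c : F, X *ᵥ b + c • X *ᵥ a ≠ 0 := by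
  have h1 : 1 < Module.finrank F (LinearMap.range X.mulVecLin) := hX
  have : Nontrivial (LinearMap.range X.mulVecLin) :=
    Module.nontrivial_of_finrank_pos (R := F) (by omega)
  obtain ⟨⟨x, a, hax⟩, hx⟩ := exists_ne (0 : LinearMap.range X.mulVecLin)
  obtain ⟨⟨y, b, hby⟩, hy⟩ := exists_linearIndependent_pair_of_one_lt_finrank h1 hx
  have hax' : X *ᵥ a = x := hax
  have hby' : X *ᵥ b = y := hby
  refine ⟨a, b, ?_, ?_⟩
  · rw [hax']
    exact fun h => hx (Subtype.ext h)
  · intro c h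
    rw [hax', hby'] at h
    have := (LinearIndependent.pair_iff.1 hy) c 1
      (Subtype.ext (by simpa [add_comm] using h))
    exact one_ne_zero this.2

/-- If `X` has rank at least two, then `q ⬝ ‖C X Cᵀ‖₀ ≥ (q+1) d²`, i.e.
`‖C X Cᵀ‖₀ ≥ (1 + 1/q) d²`. -/
theorem matWt_conj_of_rank_two_le {F : Type*} [Field F] [Fintype F] {N n : ℕ}
    (ε : ℝ) (hε : 0 < ε) (d : ℕ) (hd : 1 ≤ d)
    (C : Matrix (Fin N) (Fin n) F) (hC : IsBalancedGen ε d C)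
    (X : Matrix (Fin n) (Fin n) F) (hX : 2 ≤ X.rank) :
    Fintype.card F * matWt (C * X * Cᵀ) ≥ (Fintype.card F + 1) * d ^ 2 := by
  classical
  have hwt : ∀ x : Fin n → F, x ≠ 0 → d ≤ hammingWt (C *ᵥ x) := fun x hx => by
    exact_mod_cast (hC.2 x hx).1
  obtain ⟨a, b, ha, hab⟩ := exists_pair_of_two_le_rank X hX
  set u := C *ᵥ (X *ᵥ a) with hu
  set v := C *ᵥ (X *ᵥ b) with hv
  set S := Finset.univ.filter fun i => u i ≠ 0 ∨ v i ≠ 0 with hS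
  have hcount : (Fintype.card F + 1) * d ≤ Fintype.card F * S.card := by
    refine le_trans ?_ (hammingWt_add_sum_le u v)
    have h1 : d ≤ hammingWt u := hwt _ ha
    have h2 : ∑ _c : F, d ≤ ∑ c : F, hammingWt (v + c • u) := by
      refine Finset.sum_le_sum fun c _ => ?_
      have := hwt _ (hab c)
      rwa [mulVec_add, mulVec_smul] at this
    rw [Finset.sum_const, Finset.card_univ, smul_eq_mul] at h2
    linarith
  have hrows : ∀ i ∈ S, d ≤ hammingWt ((C * X * Cᵀ) i) := by
    intro i hi
    have hrow : (C * X * Cᵀ) i = C *ᵥ ((C * X) i) := by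
      ext j
      simp only [mul_apply' (M := C * X), mulVec, dotProduct_comm (C j)]
      rfl
    rw [hrow]
    apply hwt
    intro h0
    have hz : ∀ w, (C *ᵥ (X *ᵥ w)) i = 0 := fun w => by
      rw [mulVec_mulVec, mulVec, h0, zero_dotProduct]
    rcases (Finset.mem_filter.1 hi).2 with h | h
    · exact h (hz a)
    · exact h (hz b)
  have hM := mul_le_matWt_of_rows (C * X * Cᵀ) d S hrows
  calc (Fintype.card F + 1) * d ^ 2 = (Fintype.card F + 1) * d * d := by ring
    _ ≤ Fintype.card F * S.card * d := Nat.mul_le_mul_right d hcount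
    _ = Fintype.card F * (S.card * d) := by ring
    _ ≤ Fintype.card F * matWt (C * X * Cᵀ) := Nat.mul_le_mul_left _ hM
end

section
/- (Completeness of the MDP reduction.) Let F_q be a finite field, let Q_1, …, Q_m ∈ F_q^{n×n} be coefficient matrices, let ε > 0 and d ≥ 1, and let C ∈ F_q^{N×n} be a generator matrix of an ε-balanced code of minimum distance d. Define V = {C X Cᵀ : X ∈ F_q^{n×n}, X = Xᵀ, Q_ℓ(X) = 0 for all ℓ ∈ [m]}. If there exists a nonzero x ∈ F_q^n with Q_ℓ(x xᵀ) = 0 for all ℓ ∈ [m], then V contains a nonzero matrix Y (namely Y = (Cx)(Cx)ᵀ) with ‖Y‖₀ ≤ (1+ε)² · d². -/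
/-! The witness is `X = x xᵀ`, for which `C X Cᵀ = (Cx)(Cx)ᵀ`. Injectivity of `C` gives `Cx ≠ 0`, so
this rank-one matrix is nonzero, and by `matWt_vecMulVec` its weight is the square of the weight
of `Cx`, which the balance condition bounds by `(1 + ε) d`. -/

open Matrix

/-- Evaluation of the coefficient matrix `Q` at the matrix `X`:
`Q(X) = Σ_{i,j} Q[i,j] ⬝ X[i,j]`. -/
def quadEval {F : Type*} [Field F] {n : ℕ} (Q X : Matrix (Fin n) (Fin n) F) : F :=
  ∑ i, ∑ j, Q i j * X i j

/-- The support of `u vᵀ` is the product of the supports of `u` and `v`, as a field has no zero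
divisors. -/
lemma matWt_vecMulVec {ι κ : Type*} [Fintype ι] [Fintype κ] {F : Type*} [Field F]
    (u : ι → F) (v : κ → F) : matWt (vecMulVec u v) = hammingWt u * hammingWt v := by
  unfold matWt hammingWt
  rw [← Set.ncard_prod]
  congr 1
  ext p
  simp [vecMulVec_apply]

/-- Completeness of the MDP reduction: if `x ≠ 0` satisfies all the quadratic equations,
then `V = {C X Cᵀ : X = Xᵀ, Q_ℓ(X) = 0 ∀ℓ}` contains the nonzero matrix
`Y = (Cx)(Cx)ᵀ` of Hamming weight at most `(1+ε)² d²`. -/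
theorem mdp_reduction_completeness {F : Type*} [Field F] [Fintype F] {N n m : ℕ}
    (Q : Fin m → Matrix (Fin n) (Fin n) F)
    (ε : ℝ) (hε : 0 < ε) (d : ℕ) (hd : 1 ≤ d)
    (C : Matrix (Fin N) (Fin n) F) (hC : IsBalancedGen ε d C)
    (x : Fin n → F) (hx : x ≠ 0)
    (hQx : ∀ ℓ, quadEval (Q ℓ) (vecMulVec x x) = 0) :
    ∃ Y : Matrix (Fin N) (Fin N) F,
      Y = vecMulVec (C.mulVec x) (C.mulVec x) ∧
      (∃ X : Matrix (Fin n) (Fin n) F,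
        X.IsSymm ∧ (∀ ℓ, quadEval (Q ℓ) X = 0) ∧ Y = C * X * Cᵀ) ∧
      Y ≠ 0 ∧ (matWt Y : ℝ) ≤ (1 + ε) ^ 2 * (d : ℝ) ^ 2 := by
  obtain ⟨hinj, hwt⟩ := hC
  have hCx : C.mulVec x ≠ 0 := fun h => hx (hinj (h.trans (mulVec_zero C).symm))
  refine ⟨_, rfl, ⟨vecMulVec x x, ?_, hQx, ?_⟩, ?_, ?_⟩
  · exact transpose_vecMulVec x x
  · rw [mul_vecMulVec, vecMulVec_mul, vecMul_transpose]
  · obtain ⟨i, hi⟩ := Function.ne_iff.mp hCx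
    intro h
    exact mul_ne_zero hi hi (congrFun (congrFun h i) i)
  · rw [matWt_vecMulVec, ← mul_pow, Nat.cast_mul, ← sq]
    exact pow_le_pow_left₀ (Nat.cast_nonneg _) (hwt x hx).2 2
end

section
/- (Completeness of the distinguished-coordinate MDP reduction.) Let F_q be a finite field, let Q_1, …, Q_m ∈ F_q^{n×n} be coefficient matrices, let ε > 0 and d ≥ 1, and let C ∈ F_q^{N×n} be a generator matrix of an ε-balanced code of minimum distance d. Define V' = {(C X Cᵀ, X[n,n]) : X ∈ F_q^{n×n}, X = Xᵀ, Q_ℓ(X) = 0 for all ℓ ∈ [m]} ⊆ F_q^{N×N} × F_q. If there exists x ∈ F_q^n with x_n = 1 and Q_ℓ(x xᵀ) = 0 for all ℓ ∈ [m], then V' contains an element whose last coordinate equals 1 and whose total Hamming weight is at most (1+ε)² · d² + 1. -/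
/-! The witness is `X = x xᵀ`. It is symmetric, satisfies the equations by hypothesis, and has
last diagonal entry `1 * 1 = 1`. Moreover `C X Cᵀ = (C x)(C x)ᵀ`, and over a field the support of
an outer product `y yᵀ` is the square of the support of `y`, so its weight is `wt(C x)²`. As
`x ≠ 0`, the balance condition bounds this by `((1 + ε) d)²`; the last coordinate adds `1`. -/

open Matrix

open Classical in
/-- Hamming weight of a pair `(M, a)`: `‖M‖₀` plus `1` if `a ≠ 0`. -/
noncomputable def pairWt {η κ F : Type*} [Zero F] (Ma : Matrix η κ F × F) : ℕ :=
  matWt Ma.1 + (if Ma.2 = 0 then 0 else 1)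

theorem matWt_vecMulVec_s16 {F : Type*} [Field F] {N : ℕ} (y : Fin N → F) :
    matWt (vecMulVec y y) = hammingWt y ^ 2 := by
  have h : {p : Fin N × Fin N | vecMulVec y y p.1 p.2 ≠ 0} =
      {i | y i ≠ 0} ×ˢ {i | y i ≠ 0} := by
    ext p
    simp [vecMulVec_apply]
  rw [matWt, h, Set.ncard_prod, hammingWt, sq]

/-- Completeness of the distinguished-coordinate MDP reduction: if some `x` with last
coordinate `1` satisfies all the quadratic equations, then
`V' = {(C X Cᵀ, X[n,n]) : X = Xᵀ, Q_ℓ(X) = 0 ∀ℓ}` contains an element whose last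
coordinate is `1` and whose total Hamming weight is at most `(1+ε)² d² + 1`. -/
theorem mdp_dist_reduction_completeness {F : Type*} [Field F] [Fintype F] {N n m : ℕ}
    (hn : 0 < n) (Q : Fin m → Matrix (Fin n) (Fin n) F)
    (ε : ℝ) (hε : 0 < ε) (d : ℕ) (hd : 1 ≤ d)
    (C : Matrix (Fin N) (Fin n) F) (hC : IsBalancedGen ε d C)
    (x : Fin n → F) (hxn : x ⟨n - 1, by omega⟩ = 1)
    (hQx : ∀ ℓ, quadEval (Q ℓ) (vecMulVec x x) = 0) :
    ∃ X : Matrix (Fin n) (Fin n) F,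
      X.IsSymm ∧ (∀ ℓ, quadEval (Q ℓ) X = 0) ∧
      X ⟨n - 1, by omega⟩ ⟨n - 1, by omega⟩ = 1 ∧
      (pairWt (C * X * Cᵀ, X ⟨n - 1, by omega⟩ ⟨n - 1, by omega⟩) : ℝ) ≤
        (1 + ε) ^ 2 * (d : ℝ) ^ 2 + 1 := by
  have hx : x ≠ 0 := by
    rintro rfl
    simp at hxn
  have hmul : C * vecMulVec x x * Cᵀ = vecMulVec (C *ᵥ x) (C *ᵥ x) := by
    rw [mul_vecMulVec, vecMulVec_mul, vecMul_transpose]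
  have hwt := (hC.2 x hx).2
  refine ⟨vecMulVec x x, ?_, hQx, ?_, ?_⟩
  · ext i j
    simp [vecMulVec_apply, mul_comm]
  · simp [vecMulVec_apply, hxn]
  · have hone : vecMulVec x x ⟨n - 1, by omega⟩ ⟨n - 1, by omega⟩ = 1 := by
      simp [vecMulVec_apply, hxn]
    rw [hone, hmul, pairWt, matWt_vecMulVec_s16, if_neg one_ne_zero, ← mul_pow]
    push_cast
    gcongr
end
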